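/- Let d ↦ n(d) be a function with n(d) → ∞ and d/n(d) → 0 as d → ∞. For each d, let X_1, …, X_{n(d)} be i.i.d. d-dimensional standard normal random vectors N_d(0, I), let S_d = (1/n(d)) Σ_{j=1}^{n(d)} X_j X_j^t, and S*_d = √(n(d)/d)(S_d − I). Then ‖S*_d‖₂ → 2 almost surely as d → ∞; in fact λ_1(S*_d) → −2 and λ_d(S*_d) → 2 almost surely. -/

import Mathlib

open MeasureTheory ProbabilityTheory Filter Matrix

/-- The eigenvalues of a real symmetric `d × d` matrix, sorted in increasing order,
so that `sortedEigs A i` is `λ_{i+1}(A)` with `λ_1(A) ≤ … ≤ λ_d(A)`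
(junk value `0` if the matrix is not symmetric). -/
noncomputable def sortedEigs {d : ℕ} (A : Matrix (Fin d) (Fin d) ℝ) : Fin d → ℝ :=
  if h : A.IsHermitian then h.eigenvalues ∘ Tuple.sort h.eigenvalues else 0

/-- The spectral norm `‖A‖₂ = max (|λ_1(A)|, |λ_d(A)|)` of a symmetric matrix,
i.e. the largest absolute value of an eigenvalue. -/
noncomputable def specNorm {d : ℕ} (A : Matrix (Fin d) (Fin d) ℝ) : ℝ :=
  ⨆ i : Fin d, |sortedEigs A i|



namespace CovStar

/-- Standard Gaussian product measure. -/
noncomputable abbrev gam (ι : Type) [Fintype ι] : Measure (ι → ℝ) :=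
  Measure.pi fun _ : ι => gaussianReal 0 1

/-- squared norm -/
def sqn {ι : Type} [Fintype ι] (x : ι → ℝ) : ℝ := ∑ i, x i ^ 2

lemma sqn_nonneg {ι : Type} [Fintype ι] (x : ι → ℝ) : 0 ≤ sqn x :=
  Finset.sum_nonneg fun _ _ => sq_nonneg _

lemma measurable_sqn {ι : Type} [Fintype ι] : Measurable (sqn : (ι → ℝ) → ℝ) := by
  unfold sqn; fun_prop

/-- first basis vector -/
def e0 (d : ℕ) : Fin d → ℝ := fun i => if (i : ℕ) = 0 then 1 else 0

/-- Householder vector -/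
noncomputable def hv {d : ℕ} (g : Fin d → ℝ) : Fin d → ℝ :=
  fun i => g i - √(sqn g) * e0 d i

/-- Householder reflection -/
noncomputable def hh {d : ℕ} (g y : Fin d → ℝ) : Fin d → ℝ :=
  fun i => y i - 2 * (∑ j, hv g j * y j) / (sqn (hv g)) * hv g i

lemma hh_add {d : ℕ} (g x y : Fin d → ℝ) : hh g (x + y) = hh g x + hh g y := by
  ext i; simp only [hh, Pi.add_apply, mul_add, Finset.sum_add_distrib]; ring

lemma hh_smul {d : ℕ} (g y : Fin d → ℝ) (c : ℝ) : hh g (c • y) = c • hh g y := by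
  ext i
  simp only [hh, Pi.smul_apply, smul_eq_mul, mul_left_comm _ c, ← Finset.mul_sum]; ring

lemma hh_symm {d : ℕ} (g x y : Fin d → ℝ) : ∑ i, hh g x i * y i = ∑ i, x i * hh g y i := by
  simp only [hh, sub_mul, mul_sub, Finset.sum_sub_distrib]
  congr 1
  simp only [mul_assoc, ← Finset.mul_sum]
  simp only [mul_left_comm (x _), ← Finset.mul_sum, mul_comm (x _)]
  ring

lemma hh_invol {d : ℕ} (g x : Fin d → ℝ) : hh g (hh g x) = x := by
  ext i
  by_cases h : sqn (hv g) = 0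
  · simp [hh, h]
  have h1 : ∑ j, hv g j * hh g x j = - ∑ j, hv g j * x j := by
    simp only [hh, mul_sub, Finset.sum_sub_distrib, mul_left_comm (hv g _), ← Finset.mul_sum]
    have : ∑ i, hv g i * hv g i = sqn (hv g) := by simp [sqn, sq]
    rw [this]; field_simp; ring
  rw [hh, h1, hh]; ring

lemma hh_sqn {d : ℕ} (g x : Fin d → ℝ) : sqn (hh g x) = sqn x := by
  have := hh_symm g x (hh g x)
  rw [hh_invol] at this
  simpa [sqn, sq] using this

lemma sum_e0 {d : ℕ} (x : Fin (d+1) → ℝ) : ∑ i, e0 (d+1) i * x i = x 0 := by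
  simp [e0]

lemma hh_self {d : ℕ} (g : Fin d → ℝ) : hh g g = fun i => √(sqn g) * e0 d i := by
  cases d with
  | zero => ext i; exact i.elim0
  | succ d =>
    have hs : √(sqn g) * √(sqn g) = sqn g := Real.mul_self_sqrt (sqn_nonneg g)
    have he : ∑ i, e0 (d+1) i * e0 (d+1) i = 1 := by rw [sum_e0]; simp [e0]
    have h1 : ∑ j, hv g j * g j = sqn g - √(sqn g) * g 0 := by
      simp only [hv, sub_mul, Finset.sum_sub_distrib, mul_assoc, ← Finset.mul_sum, sum_e0]
      simp [sqn, sq]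
    have h2 : sqn (hv g) = 2 * (sqn g - √(sqn g) * g 0) := by
      have : sqn (hv g) = ∑ j, hv g j * g j - √(sqn g) * (g 0 - √(sqn g)) := by
        have h3 : hv g 0 = g 0 - √(sqn g) := by simp [hv, e0]
        rw [← h3, ← sum_e0 (hv g), Finset.mul_sum, ← Finset.sum_sub_distrib]
        refine Finset.sum_congr rfl fun i _ => ?_
        simp only [hv]; ring
      rw [this, h1]; linear_combination hs
    by_cases h : sqn (hv g) = 0
    · have h4 : ∀ i, hv g i = 0 := by
        intro i
        have := (Finset.sum_eq_zero_iff_of_nonneg (fun i _ => sq_nonneg (hv g i))).1 h i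
          (Finset.mem_univ i)
        exact pow_eq_zero_iff (two_ne_zero) |>.1 this
      ext i
      have := h4 i
      simp only [hh, h4, mul_zero, sub_zero]
      simp only [hv] at this; linarith
    · ext i
      have : 2 * (∑ j, hv g j * g j) / (sqn (hv g)) = 1 := by
        rw [h1, ← h2]; field_simp
      rw [hh, this, hv]; ring

lemma measurable_hv {d : ℕ} : Measurable (hv : (Fin d → ℝ) → _) := by
  have := @measurable_sqn (Fin d) _
  unfold hv; fun_prop

lemma measurable_hh {d : ℕ} : Measurable (fun p : (Fin d → ℝ) × (Fin d → ℝ) => hh p.1 p.2) := by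
  have h1 := @measurable_sqn (Fin d) _
  have h2 : Measurable (fun p : (Fin d → ℝ) × (Fin d → ℝ) => hv p.1) :=
    measurable_hv.comp measurable_fst
  have h3 : Measurable (fun p : (Fin d → ℝ) × (Fin d → ℝ) => sqn (hv p.1)) := h1.comp h2
  have h4 : ∀ i, Measurable (fun p : (Fin d → ℝ) × (Fin d → ℝ) => hv p.1 i) := by
    intro i; exact (measurable_pi_apply i).comp h2
  unfold hh
  refine measurable_pi_iff.2 fun i => ?_
  have := h4 i
  fun_prop

lemma gam_inv {ι : Type} [Fintype ι] (A : (ι → ℝ) →ₗ[ℝ] (ι → ℝ))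
    (hA : ∀ x, sqn (A x) = sqn x) : MeasurePreserving A (gam ι) (gam ι) := by
  classical
  let e := WithLp.linearEquiv 2 ℝ (ι → ℝ)
  let L : EuclideanSpace ℝ ι →ₗᵢ[ℝ] EuclideanSpace ℝ ι :=
    { toLinearMap := e.symm.toLinearMap ∘ₗ A ∘ₗ e.toLinearMap
      norm_map' := by
        intro x
        simp only [EuclideanSpace.norm_eq, Real.norm_eq_abs, sq_abs]
        congr 1
        exact hA (e x) }
  let L' := L.toLinearIsometryEquiv rfl
  have h := stdGaussian_map L'
  have hmA : Measurable A := (LinearMap.continuous_of_finiteDimensional A).measurable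
  refine ⟨hmA, ?_⟩
  rw [← map_pi_eq_stdGaussian, Measure.map_map (by fun_prop) (by fun_prop)] at h
  have h2 := congrArg (Measure.map (WithLp.ofLp : EuclideanSpace ℝ ι → _)) h
  rw [Measure.map_map (by fun_prop) (by fun_prop), Measure.map_map (by fun_prop) (by fun_prop)] at h2
  have h3 : (WithLp.ofLp : EuclideanSpace ℝ ι → _) ∘ WithLp.toLp 2 = id := rfl
  rw [h3, Measure.map_id] at h2
  exact h2

lemma gam_split {ι κ κ' : Type} [Fintype ι] [Fintype κ] [Fintype κ'] (e : κ ⊕ κ' ≃ ι) :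
    MeasurePreserving (fun x : ι → ℝ => ((fun k => x (e (Sum.inl k))), fun k => x (e (Sum.inr k))))
      (gam ι) ((gam κ).prod (gam κ')) := by
  have h1 := (measurePreserving_piCongrLeft (fun _ : ι => gaussianReal 0 1) e).symm
  have h2 := measurePreserving_sumPiEquivProdPi (fun _ : κ ⊕ κ' => gaussianReal 0 1)
  exact h2.comp h1

lemma gam_uncurry {κ κ' : Type} [Fintype κ] [Fintype κ'] :
    MeasurePreserving (fun (x : κ → κ' → ℝ) (p : κ × κ') => x p.1 p.2)
      (Measure.pi fun _ : κ => gam κ') (gam (κ × κ')) := by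
  refine ⟨by fun_prop, ?_⟩
  refine (Measure.pi_eq fun s hs => ?_).symm
  rw [Measure.map_apply (by fun_prop) (MeasurableSet.univ_pi hs)]
  have : (fun (x : κ → κ' → ℝ) (p : κ × κ') => x p.1 p.2) ⁻¹' (Set.univ.pi s)
      = Set.univ.pi fun i => Set.univ.pi fun j => s (i, j) := by
    ext x; simp
  rw [this, Measure.pi_pi]
  simp [Measure.pi_pi, Fintype.prod_prod_type]

end CovStar

namespace CovStar

/-- extension by zero -/
def ex {d : ℕ} (x : Fin d → ℝ) (i : ℕ) : ℝ := if h : i < d then x ⟨i, h⟩ else 0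

/-- matrix vector product -/
def mv {n d : ℕ} (G : Fin n × Fin d → ℝ) (x : Fin d → ℝ) : Fin n → ℝ :=
  fun r => ∑ c, G (r, c) * x c

/-- Bidiagonalizability with controlled entries. -/
def Good (t u : ℝ) (n d : ℕ) (G : Fin n × Fin d → ℝ) : Prop :=
  ∃ (a b : ℕ → ℝ) (R : (Fin d → ℝ) → (Fin d → ℝ)),
    (∀ i < d, 0 ≤ a i ∧ 0 ≤ b i ∧ |a i ^ 2 - ((n : ℝ) - i)| ≤ t ∧
      |b i ^ 2 - ((d : ℝ) - 1 - i)| ≤ u) ∧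
    Function.Surjective R ∧ (∀ x, sqn (R x) = sqn x) ∧ (∀ x, ex (R x) 0 = ex x 0) ∧
    ∀ x, sqn (mv G (R x)) = ∑ i ∈ Finset.range d, (a i * ex x i + b i * ex x (i + 1)) ^ 2

/-- Householder as linear map -/
noncomputable def hhL {d : ℕ} (g : Fin d → ℝ) : (Fin d → ℝ) →ₗ[ℝ] (Fin d → ℝ) where
  toFun := hh g
  map_add' := hh_add g
  map_smul' := fun c x => hh_smul g x c

/-- apply Householder to columns -/
noncomputable def cH {n d : ℕ} (g : Fin n → ℝ) (M : Fin n × Fin d → ℝ) : Fin n × Fin d → ℝ :=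
  fun p => hh g (fun r => M (r, p.2)) p.1

/-- apply Householder to rows -/
noncomputable def rH {n d : ℕ} (g : Fin d → ℝ) (M : Fin n × Fin d → ℝ) : Fin n × Fin d → ℝ :=
  fun p => hh g (fun c => M (p.1, c)) p.2

lemma mv_cH {n d : ℕ} (g : Fin n → ℝ) (M : Fin n × Fin d → ℝ) (z : Fin d → ℝ) :
    mv (cH g M) z = hh g (mv M z) := by
  have h1 : mv M z = ∑ c, z c • (fun r => M (r, c)) := by
    ext r; simp [mv, mul_comm]
  have h2 : hh g (mv M z) = ∑ c, z c • hh g (fun r => M (r, c)) := by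
    have := map_sum (hhL g) (fun c => z c • (fun r => M (r, c))) Finset.univ
    rw [← h1] at this
    simp only [map_smul] at this
    exact this
  rw [h2]; ext r; simp [mv, cH, mul_comm]

lemma mv_rH {n d : ℕ} (g : Fin d → ℝ) (M : Fin n × Fin d → ℝ) (z : Fin d → ℝ) :
    mv (rH g M) z = mv M (hh g z) := by
  ext r; exact hh_symm g (fun c => M (r, c)) z

lemma sum_e0' {d : ℕ} (x : Fin d → ℝ) : ∑ i, e0 d i * x i = ex x 0 := by
  cases d with
  | zero => simp [ex]
  | succ d => rw [sum_e0]; simp [ex]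

lemma ex_cons_zero {d : ℕ} (x0 : ℝ) (y : Fin d → ℝ) :
    ex (Fin.cons x0 y : Fin (d+1) → ℝ) 0 = x0 := by simp [ex]

lemma ex_succ {d : ℕ} (x : Fin (d+1) → ℝ) (i : ℕ) :
    ex x (i + 1) = ex (Fin.tail x) i := by
  simp only [ex, add_lt_add_iff_right]
  split_ifs <;> rfl

lemma sqn_cons {d : ℕ} (x : Fin (d+1) → ℝ) : sqn x = x 0 ^ 2 + sqn (Fin.tail x) := by
  simp [sqn, Fin.sum_univ_succ, Fin.tail]

/-- column zero -/
def col0 {n d : ℕ} (G : Fin n × Fin (d+1) → ℝ) : Fin n → ℝ := fun r => G (r, 0)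
/-- remaining columns -/
def colT {n d : ℕ} (G : Fin n × Fin (d+1) → ℝ) : Fin n × Fin d → ℝ := fun p => G (p.1, p.2.succ)
/-- row zero -/
def row0 {n d : ℕ} (G : Fin (n+1) × Fin d → ℝ) : Fin d → ℝ := fun c => G (0, c)
/-- remaining rows -/
def rowT {n d : ℕ} (G : Fin (n+1) × Fin d → ℝ) : Fin n × Fin d → ℝ := fun p => G (p.1.succ, p.2)

/-- first half step -/
noncomputable def stepH {n d : ℕ} (G : Fin n × Fin (d+1) → ℝ) : Fin n × Fin d → ℝ :=
  cH (col0 G) (colT G)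
/-- second half step -/
noncomputable def stepK {n d : ℕ} (H : Fin (n+1) × Fin d → ℝ) : Fin n × Fin d → ℝ :=
  rH (row0 H) (rowT H)

lemma good_step {t u : ℝ} {n d : ℕ} (G : Fin (n+1) × Fin (d+1) → ℝ)
    (h1 : |sqn (col0 G) - ((n : ℝ) + 1)| ≤ t) (h2 : |sqn (row0 (stepH G)) - (d : ℝ)| ≤ u)
    (h3 : Good t u n d (stepK (stepH G))) : Good t u (n+1) (d+1) G := by
  obtain ⟨a, b, R, hab, hR, hRn, hR0, hF⟩ := h3
  set g := col0 G with hg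
  set h := row0 (stepH G) with hh'
  refine ⟨fun i => Nat.casesOn i (√(sqn g)) a, fun i => Nat.casesOn i (√(sqn h)) b,
    fun x => Fin.cons (x 0) (hh h (R (Fin.tail x))), ?_, ?_, ?_, ?_, ?_⟩
  · intro i hi
    cases i with
    | zero =>
      refine ⟨Real.sqrt_nonneg _, Real.sqrt_nonneg _, ?_, ?_⟩
      · simpa [Real.sq_sqrt (sqn_nonneg g)] using h1
      · simpa [Real.sq_sqrt (sqn_nonneg h)] using h2
    | succ i =>
      obtain ⟨q1, q2, q3, q4⟩ := hab i (by omega)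
      refine ⟨q1, q2, ?_, ?_⟩
      · convert q3 using 2; push_cast; ring
      · convert q4 using 2; push_cast; ring
  · intro y
    obtain ⟨w, hw⟩ := hR (hh h (Fin.tail y))
    refine ⟨Fin.cons (y 0) w, ?_⟩
    simp [hw, hh_invol]
  · intro x
    simp only [sqn_cons, Fin.cons_zero, Fin.tail_cons, hh_sqn, hRn]
  · intro x; simp [ex]
  · intro x
    rw [Finset.sum_range_succ']
    simp only [ex_succ x]
    rw [← hF (Fin.tail x)]
    set w := R (Fin.tail x) with hw
    have e1 : mv G (Fin.cons (x 0) (hh h w)) = x 0 • g + mv (colT G) (hh h w) := by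
      ext r
      simp [mv, Fin.sum_univ_succ, colT, hg, col0, mul_comm]
    have e2 : hh g (mv G (Fin.cons (x 0) (hh h w)))
        = fun i => x 0 * (√(sqn g) * e0 (n+1) i) + mv (stepH G) (hh h w) i := by
      rw [e1, hh_add, hh_smul, hh_self, ← mv_cH]
      rfl
    rw [← hh_sqn g, e2, sqn_cons, add_comm]
    have e3 : mv (stepH G) (hh h w) 0 = √(sqn h) * ex w 0 := by
      have : mv (stepH G) (hh h w) 0 = ∑ c, h c * hh h w c := rfl
      rw [this, ← hh_symm, hh_self, ← sum_e0', Finset.mul_sum]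
      simp only [mul_assoc]
    have e4 : (Fin.tail fun i => x 0 * (√(sqn g) * e0 (n+1) i) + mv (stepH G) (hh h w) i)
        = mv (stepK (stepH G)) w := by
      rw [stepK, mv_rH]
      ext i
      simp [Fin.tail, e0, mv, rowT, ← hh']
    rw [e4, e3, hw, hR0]
    congr 1
    simp [e0, ex, mul_comm]

/-- column splitting of the index set -/
def eCol (n d : ℕ) : Fin n ⊕ (Fin n × Fin d) ≃ Fin n × Fin (d+1) where
  toFun := Sum.elim (fun r => (r, 0)) (fun p => (p.1, p.2.succ))
  invFun := fun p => Fin.cases (Sum.inl p.1) (fun c => Sum.inr (p.1, c)) p.2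
  left_inv := by rintro (r | ⟨r, c⟩) <;> simp
  right_inv := by
    rintro ⟨r, c⟩
    cases c using Fin.cases <;> simp

/-- row splitting of the index set -/
def eRow (n d : ℕ) : Fin d ⊕ (Fin n × Fin d) ≃ Fin (n+1) × Fin d where
  toFun := Sum.elim (fun c => (0, c)) (fun p => (p.1.succ, p.2))
  invFun := fun p => Fin.cases (motive := fun _ => Fin d ⊕ (Fin n × Fin d))
    (Sum.inl p.2) (fun r => Sum.inr (r, p.2)) p.1
  left_inv := by rintro (r | ⟨r, c⟩) <;> simp
  right_inv := by
    rintro ⟨r, c⟩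
    cases r using Fin.cases <;> simp

lemma mp_cH {n d : ℕ} (g : Fin n → ℝ) :
    MeasurePreserving (cH g : (Fin n × Fin d → ℝ) → _) (gam _) (gam _) := by
  refine gam_inv (⟨⟨cH g, ?_⟩, ?_⟩ : (Fin n × Fin d → ℝ) →ₗ[ℝ] (Fin n × Fin d → ℝ)) ?_
  · intro x y; ext p
    exact congrFun (hh_add g (fun r => x (r, p.2)) (fun r => y (r, p.2))) p.1
  · intro c x; ext p
    exact congrFun (hh_smul g (fun r => x (r, p.2)) c) p.1
  · intro x
    change sqn (cH g x) = _
    simp only [sqn, Fintype.sum_prod_type_right]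
    exact Finset.sum_congr rfl fun c _ => hh_sqn g (fun r => x (r, c))

lemma mp_rH {n d : ℕ} (g : Fin d → ℝ) :
    MeasurePreserving (rH g : (Fin n × Fin d → ℝ) → _) (gam _) (gam _) := by
  refine gam_inv (⟨⟨rH g, ?_⟩, ?_⟩ : (Fin n × Fin d → ℝ) →ₗ[ℝ] (Fin n × Fin d → ℝ)) ?_
  · intro x y; ext p
    exact congrFun (hh_add g (fun r => x (p.1, r)) (fun r => y (p.1, r))) p.2
  · intro c x; ext p
    exact congrFun (hh_smul g (fun r => x (p.1, r)) c) p.2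
  · intro x
    change sqn (rH g x) = _
    simp only [sqn, Fintype.sum_prod_type]
    exact Finset.sum_congr rfl fun c _ => hh_sqn g (fun r => x (c, r))

lemma measurable_cH {n d : ℕ} :
    Measurable (fun p : (Fin n → ℝ) × (Fin n × Fin d → ℝ) => cH p.1 p.2) := by
  refine measurable_pi_iff.2 fun q => ?_
  have : Measurable (fun p : (Fin n → ℝ) × (Fin n × Fin d → ℝ) =>
    hh p.1 (fun r => p.2 (r, q.2))) := by
    exact measurable_hh.comp (f := fun p : (Fin n → ℝ) × (Fin n × Fin d → ℝ) =>
      (p.1, (fun r => p.2 (r, q.2)))) (by fun_prop)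
  exact (measurable_pi_apply q.1).comp this

lemma measurable_rH {n d : ℕ} :
    Measurable (fun p : (Fin d → ℝ) × (Fin n × Fin d → ℝ) => rH p.1 p.2) := by
  refine measurable_pi_iff.2 fun q => ?_
  have : Measurable (fun p : (Fin d → ℝ) × (Fin n × Fin d → ℝ) =>
    hh p.1 (fun r => p.2 (q.1, r))) := by
    exact measurable_hh.comp (f := fun p : (Fin d → ℝ) × (Fin n × Fin d → ℝ) =>
      (p.1, (fun r => p.2 (q.1, r)))) (by fun_prop)
  exact (measurable_pi_apply q.2).comp this

lemma mp_col0 {n d : ℕ} : MeasurePreserving (col0 : (Fin n × Fin (d+1) → ℝ) → _) (gam _) (gam _) :=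
  measurePreserving_fst.comp (gam_split (eCol n d))

lemma mp_row0 {n d : ℕ} : MeasurePreserving (row0 : (Fin (n+1) × Fin d → ℝ) → _) (gam _) (gam _) :=
  measurePreserving_fst.comp (gam_split (eRow n d))

lemma mp_stepH {n d : ℕ} :
    MeasurePreserving (stepH : (Fin n × Fin (d+1) → ℝ) → _) (gam _) (gam _) := by
  have h1 := gam_split (eCol n d)
  have h2 : MeasurePreserving (fun p : (Fin n → ℝ) × (Fin n × Fin d → ℝ) => (id p.1, cH p.1 p.2))
      ((gam _).prod (gam _)) ((gam _).prod (gam _)) :=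
    (MeasurePreserving.id _).skew_product measurable_cH
      (Filter.Eventually.of_forall fun g => (mp_cH g).map_eq)
  exact measurePreserving_snd.comp (h2.comp h1)

lemma mp_stepK {n d : ℕ} :
    MeasurePreserving (stepK : (Fin (n+1) × Fin d → ℝ) → _) (gam _) (gam _) := by
  have h1 := gam_split (eRow n d)
  have h2 : MeasurePreserving (fun p : (Fin d → ℝ) × (Fin n × Fin d → ℝ) => (id p.1, rH p.1 p.2))
      ((gam _).prod (gam _)) ((gam _).prod (gam _)) :=
    (MeasurePreserving.id _).skew_product measurable_rH
      (Filter.Eventually.of_forall fun g => (mp_rH g).map_eq)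
  exact measurePreserving_snd.comp (h2.comp h1)

lemma good_prob {t u : ℝ} {p q : ENNReal} (N D : ℕ)
    (hp : ∀ k ≤ N, gam (Fin k) {x | t < |sqn x - (k : ℝ)|} ≤ p)
    (hq : ∀ k ≤ D, gam (Fin k) {x | u < |sqn x - (k : ℝ)|} ≤ q) :
    ∀ (d n : ℕ), d ≤ n → n ≤ N → d ≤ D →
      ∃ E : Set (Fin n × Fin d → ℝ), MeasurableSet E ∧ (∀ G ∈ E, Good t u n d G) ∧
        gam _ Eᶜ ≤ d * (p + q) := by
  intro d
  induction d with
  | zero =>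
    intro n _ _ _
    refine ⟨Set.univ, MeasurableSet.univ, fun G _ => ?_, by simp⟩
    refine ⟨0, 0, id, by simp, Function.surjective_id, fun _ => rfl, fun _ => rfl, fun x => ?_⟩
    simp [sqn, mv]
  | succ d ih =>
    intro n hdn hnN hdD
    obtain ⟨n, rfl⟩ : ∃ m, n = m + 1 := ⟨n - 1, by omega⟩
    obtain ⟨E, hE, hG, hm⟩ := ih n (by omega) (by omega) (by omega)
    have hA : ∀ (k : ℕ) (s : ℝ), MeasurableSet {x : Fin k → ℝ | s < |sqn x - (k : ℝ)|} := by
      intro k s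
      have := @measurable_sqn (Fin k) _
      exact measurableSet_lt measurable_const (by fun_prop)
    set A := {x : Fin (n+1) → ℝ | t < |sqn x - ((n+1 : ℕ) : ℝ)|}
    set B := {x : Fin d → ℝ | u < |sqn x - (d : ℝ)|}
    have mA : MeasurableSet (col0 (d := d) ⁻¹' A) := mp_col0.measurable (hA _ _)
    have mB : MeasurableSet ((row0 ∘ stepH : (Fin (n+1) × Fin (d+1) → ℝ) → _) ⁻¹' B) :=
      (mp_row0.comp mp_stepH).measurable (hA _ _)
    have mE : MeasurableSet ((stepK ∘ stepH : (Fin (n+1) × Fin (d+1) → ℝ) → _) ⁻¹' Eᶜ) :=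
      (mp_stepK.comp mp_stepH).measurable hE.compl
    refine ⟨(col0 ⁻¹' A ∪ (row0 ∘ stepH) ⁻¹' B ∪ (stepK ∘ stepH) ⁻¹' Eᶜ)ᶜ,
      ((mA.union mB).union mE).compl, ?_, ?_⟩
    · intro G hGm
      simp only [Set.mem_compl_iff, Set.mem_union, not_or, Set.mem_preimage, not_not] at hGm
      obtain ⟨⟨g1, g2⟩, g3⟩ := hGm
      refine good_step G ?_ ?_ (hG _ g3)
      · simpa [A] using g1
      · simpa [B] using g2
    · rw [compl_compl]
      refine (measure_union_le _ _).trans ((add_le_add_left (measure_union_le _ _) _).trans ?_)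
      rw [mp_col0.measure_preimage (hA _ _).nullMeasurableSet,
        (mp_row0.comp mp_stepH).measure_preimage (hA _ _).nullMeasurableSet,
        (mp_stepK.comp mp_stepH).measure_preimage hE.compl.nullMeasurableSet]
      refine (add_le_add (add_le_add (hp _ hnN) (hq d (by omega))) hm).trans ?_
      push_cast; rw [add_mul, one_mul, add_comm]

end CovStar

namespace CovStar

lemma aux_exp {y : ℝ} (h1 : -(1/2) ≤ y) (h2 : y ≤ 1/2) : 1 ≤ (1 - y) * Real.exp (y + y^2) := by
  rcases le_or_gt 0 y with h | h
  · have := Real.quadratic_le_exp_of_nonneg (x := y + y^2) (by positivity)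
    have h3 : 1 ≤ (1 - y) * (1 + (y + y^2) + (y+y^2)^2/2) := by
      have : (1 - y) * (1 + (y + y^2) + (y+y^2)^2/2) = 1 + y^2 * (((1-y^2)*(1+y) - 2*y)/2) := by ring
      rw [this]
      have : 0 ≤ (1-y^2)*(1+y) - 2*y := by nlinarith [mul_nonneg h h, mul_nonneg h (sub_nonneg.2 h2)]
      have := mul_nonneg (sq_nonneg y) (div_nonneg this zero_le_two)
      linarith
    exact h3.trans (mul_le_mul_of_nonneg_left this (by linarith))
  · have := Real.add_one_le_exp (y + y^2)
    have h3 : 1 ≤ (1 - y) * (y + y^2 + 1) := by nlinarith [sq_nonneg y, mul_nonneg (sq_nonneg y) (neg_nonneg.2 h.le)]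
    exact h3.trans (mul_le_mul_of_nonneg_left this (by linarith))

lemma int_one {s : ℝ} (h1 : -(1/4) ≤ s) (h2 : s ≤ 1/4) :
    0 < ∫ x, Real.exp (s * (x^2 - 1)) ∂(gaussianReal 0 1) ∧
    ∫ x, Real.exp (s * (x^2 - 1)) ∂(gaussianReal 0 1) ≤ Real.exp (2 * s^2) := by
  have hI : ∫ x, Real.exp (s * (x^2 - 1)) ∂(gaussianReal 0 1) = Real.exp (-s) * (√(1 - 2*s))⁻¹ := by
    rw [integral_gaussianReal_eq_integral_smul one_ne_zero]
    have : ∀ x : ℝ, gaussianPDFReal 0 1 x • Real.exp (s * (x^2 - 1))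
        = ((√(2 * Real.pi))⁻¹ * Real.exp (-s)) * Real.exp (-(1/2 - s) * x^2) := by
      intro x
      simp only [gaussianPDFReal, smul_eq_mul, NNReal.coe_one, mul_one, sub_zero]
      rw [mul_assoc, mul_assoc, ← Real.exp_add, ← Real.exp_add]
      congr 2; ring
    simp only [this]
    rw [integral_const_mul, integral_gaussian]
    have h3 : Real.pi / (1/2 - s) = (2 * Real.pi) * (1 - 2*s)⁻¹ := by
      have : (1:ℝ)/2 - s ≠ 0 := by linarith
      have : (1:ℝ) - 2 * s ≠ 0 := by linarith
      field_simp
    rw [h3, Real.sqrt_mul (by positivity : (0:ℝ) ≤ 2 * Real.pi), Real.sqrt_inv]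
    have : √(2 * Real.pi) ≠ 0 := by positivity
    field_simp
  have hp : 0 < 1 - 2 * s := by linarith
  rw [hI]
  refine ⟨by positivity, ?_⟩
  have h4 := aux_exp (y := 2*s) (by linarith) (by linarith)
  have h5 : 1 ≤ √(1 - 2*s) * Real.exp (s + 2*s^2) := by
    have h4' := Real.sqrt_le_sqrt h4
    rw [Real.sqrt_one, Real.sqrt_mul hp.le, ← Real.exp_half] at h4'
    convert h4' using 3; ring
  have h6 : 0 < √(1 - 2*s) := by positivity
  rw [← div_eq_mul_inv, div_le_iff₀ h6]
  have : Real.exp (s + 2*s^2) = Real.exp (2 * s^2) * (Real.exp (-s))⁻¹ := by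
    rw [← Real.exp_neg, ← Real.exp_add]; congr 1; ring
  rw [this] at h5
  have h7 := Real.exp_pos (-s)
  calc Real.exp (-s) = Real.exp (-s) * 1 := by ring
    _ ≤ Real.exp (-s) * (√(1 - 2*s) * (Real.exp (2 * s^2) * (Real.exp (-s))⁻¹)) := by gcongr
    _ = _ := by field_simp

lemma mgf_sqn {k : ℕ} {s : ℝ} (h1 : -(1/4) ≤ s) (h2 : s ≤ 1/4) :
    Integrable (fun x : Fin k → ℝ => Real.exp (s * (sqn x - k))) (gam (Fin k)) ∧
    mgf (fun x : Fin k → ℝ => sqn x - k) (gam (Fin k)) s ≤ Real.exp (2 * s^2 * k) := by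
  obtain ⟨h3, h4⟩ := int_one h1 h2
  have h5 : ∀ x : Fin k → ℝ, Real.exp (s * (sqn x - k)) = ∏ i, Real.exp (s * (x i ^2 - 1)) := by
    intro x
    rw [← Real.exp_sum]
    congr 1
    rw [← Finset.mul_sum, Finset.sum_sub_distrib]
    simp [sqn]
  have h6 : ∫ x : Fin k → ℝ, Real.exp (s * (sqn x - k)) ∂(gam (Fin k))
      = (∫ x, Real.exp (s * (x^2 - 1)) ∂(gaussianReal 0 1)) ^ k := by
    simp only [h5]
    rw [integral_fintype_prod_eq_prod (𝕜 := ℝ) (fun (_ : Fin k) x => Real.exp (s * (x^2 - 1)))]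
    simp
  constructor
  · by_contra hc
    rw [integral_undef hc] at h6
    exact (pow_pos h3 k).ne h6
  · rw [mgf, h6]
    refine (pow_le_pow_left₀ h3.le h4 k).trans_eq ?_
    rw [← Real.exp_nat_mul]; congr 1; ring

lemma tail {k : ℕ} {N t : ℝ} (hN : 0 < N) (hk : (k : ℝ) ≤ N) (ht : 0 ≤ t) (htN : t ≤ N) :
    gam (Fin k) {x | t < |sqn x - (k : ℝ)|} ≤ ENNReal.ofReal (2 * Real.exp (- t^2 / (8 * N))) := by
  have hs0 : 0 ≤ t / (4 * N) := by positivity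
  have hs1 : t / (4 * N) ≤ 1/4 := by
    rw [div_le_iff₀ (by positivity)]; linarith
  have key : - (t / (4 * N)) * t + 2 * (t / (4 * N))^2 * k ≤ - t^2 / (8 * N) := by
    have : 2 * (t / (4 * N))^2 * k ≤ 2 * (t / (4 * N))^2 * N := by gcongr
    have e : - (t / (4 * N)) * t + 2 * (t / (4 * N))^2 * N = - t^2 / (8 * N) := by
      field_simp; ring
    linarith
  obtain ⟨i1, m1⟩ := mgf_sqn (k := k) (s := t / (4 * N)) (by linarith) hs1
  obtain ⟨i2, m2⟩ := mgf_sqn (k := k) (s := -(t / (4 * N))) (by linarith) (by linarith)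
  have a1 := measure_ge_le_exp_mul_mgf (X := fun x : Fin k → ℝ => sqn x - k) t hs0 i1
  have a2 := measure_le_le_exp_mul_mgf (X := fun x : Fin k → ℝ => sqn x - k) (-t)
    (by linarith : -(t / (4 * N)) ≤ 0) i2
  have b1 : (gam (Fin k)).real {x | t ≤ sqn x - k} ≤ Real.exp (- t^2 / (8 * N)) := by
    refine a1.trans ((mul_le_mul_of_nonneg_left m1 (Real.exp_pos _).le).trans ?_)
    rw [← Real.exp_add]; exact Real.exp_le_exp.2 key
  have b2 : (gam (Fin k)).real {x | sqn x - k ≤ -t} ≤ Real.exp (- t^2 / (8 * N)) := by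
    refine a2.trans ((mul_le_mul_of_nonneg_left m2 (Real.exp_pos _).le).trans ?_)
    rw [← Real.exp_add]; refine Real.exp_le_exp.2 (le_trans (le_of_eq ?_) key); ring
  have sub : {x : Fin k → ℝ | t < |sqn x - (k : ℝ)|} ⊆ {x | t ≤ sqn x - k} ∪ {x | sqn x - k ≤ -t} := by
    intro x hx
    have hx' : t < |sqn x - (k : ℝ)| := hx
    rcases lt_abs.1 hx' with h | h
    · left; exact h.le
    · right; change sqn x - k ≤ -t; linarith
  refine (measure_mono sub).trans ?_
  rw [← ofReal_measureReal]
  refine ENNReal.ofReal_le_ofReal ((measureReal_union_le _ _).trans ?_)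
  linarith

end CovStar

namespace CovStar

lemma sqn_ex {d : ℕ} (x : Fin d → ℝ) : sqn x = ∑ i ∈ Finset.range d, ex x i ^ 2 := by
  rw [Finset.sum_range]
  simp [sqn, ex]

lemma sum_shift_le {x : ℕ → ℝ} {d : ℕ} (hx : x d = 0) :
    ∑ i ∈ Finset.range d, x (i+1) ^ 2 ≤ ∑ i ∈ Finset.range d, x i ^ 2 := by
  have h1 := Finset.sum_range_succ (fun i => x i ^ 2) d
  have h2 := Finset.sum_range_succ' (fun i => x i ^ 2) d
  rw [h1, hx] at h2
  have := sq_nonneg (x 0)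
  linarith

lemma det_upper {a b x : ℕ → ℝ} {d : ℕ} {n s δ : ℝ} (hs : 0 ≤ s) (hδ : 0 ≤ δ) (hx : x d = 0)
    (h : ∀ i < d, 0 ≤ a i ∧ 0 ≤ b i ∧ |a i ^ 2 - n| ≤ 2 * δ * s ∧ b i ^ 2 ≤ 2 * δ * s ∧
      a i * b i ≤ (1 + δ) * s) :
    |∑ i ∈ Finset.range d, (a i * x i + b i * x (i+1)) ^ 2 - n * ∑ i ∈ Finset.range d, x i ^ 2|
      ≤ (2 + 6 * δ) * s * ∑ i ∈ Finset.range d, x i ^ 2 := by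
  rw [Finset.mul_sum, ← Finset.sum_sub_distrib]
  refine (Finset.abs_sum_le_sum_abs _ _).trans ?_
  have h1 : ∀ i ∈ Finset.range d, |(a i * x i + b i * x (i+1)) ^ 2 - n * x i ^ 2|
      ≤ (1 + 3 * δ) * s * x i ^ 2 + (1 + 3 * δ) * s * x (i+1) ^ 2 := by
    intro i hi
    obtain ⟨ha, hb, h1, h2, h3⟩ := h i (Finset.mem_range.1 hi)
    rw [abs_le] at h1
    have e : (a i * x i + b i * x (i+1)) ^ 2 - n * x i ^ 2
      = (a i ^ 2 - n) * x i ^ 2 + b i ^ 2 * x (i+1) ^ 2 + 2 * (a i * b i) * (x i * x (i+1)) := by ring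
    have p0 := mul_nonneg ha hb
    have u1 : (a i ^ 2 - n) * x i ^ 2 ≤ 2 * δ * s * x i ^ 2 :=
      mul_le_mul_of_nonneg_right h1.2 (sq_nonneg _)
    have u2 : -(2 * δ * s) * x i ^ 2 ≤ (a i ^ 2 - n) * x i ^ 2 :=
      mul_le_mul_of_nonneg_right h1.1 (sq_nonneg _)
    have u3 : b i ^ 2 * x (i+1) ^ 2 ≤ 2 * δ * s * x (i+1) ^ 2 :=
      mul_le_mul_of_nonneg_right h2 (sq_nonneg _)
    have u4 : 0 ≤ b i ^ 2 * x (i+1) ^ 2 := by positivity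
    have w : a i * b i * (x i ^ 2 + x (i+1) ^ 2) ≤ (1 + δ) * s * (x i ^ 2 + x (i+1) ^ 2) :=
      mul_le_mul_of_nonneg_right h3 (by positivity)
    have u5 : 2 * (a i * b i) * (x i * x (i+1)) ≤ a i * b i * (x i ^ 2 + x (i+1) ^ 2) := by
      nlinarith [mul_nonneg p0 (sq_nonneg (x i - x (i+1)))]
    have u6 : -(a i * b i * (x i ^ 2 + x (i+1) ^ 2)) ≤ 2 * (a i * b i) * (x i * x (i+1)) := by
      nlinarith [mul_nonneg p0 (sq_nonneg (x i + x (i+1)))]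
    have z : 0 ≤ δ * s * x (i+1) ^ 2 := by positivity
    rw [e, abs_le]
    constructor <;> nlinarith
  refine (Finset.sum_le_sum h1).trans ?_
  rw [Finset.sum_add_distrib, ← Finset.mul_sum, ← Finset.mul_sum]
  have := mul_le_mul_of_nonneg_left (sum_shift_le hx) (by positivity : 0 ≤ (1 + 3 * δ) * s)
  linarith

/-- test vector -/
def tv (σ : ℝ) (m : ℕ) (i : ℕ) : ℝ := if i ≤ m then σ ^ i else 0

lemma det_lower {a b : ℕ → ℝ} {d m : ℕ} {n s δ σ : ℝ} (hs : 0 ≤ s) 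
    (hσ : σ = 1 ∨ σ = -1) (hmd : m < d) (hm : 1 ≤ δ * m) (hδ : 0 ≤ δ)
    (h : ∀ i ≤ m, |a i ^ 2 - n| ≤ 2 * δ * s ∧ b i ^ 2 ≤ 2 * δ * s ∧
      (1 - 2 * δ) * s ≤ a i * b i) :
    ∑ i ∈ Finset.range d, tv σ m i ^ 2 = m + 1 ∧
    (2 - 10 * δ) * s * (m + 1) ≤
    σ * (∑ i ∈ Finset.range d, (a i * tv σ m i + b i * tv σ m (i+1)) ^ 2 - n * (m + 1)) := by
  have hσ2 : σ ^ 2 = 1 := by rcases hσ with rfl | rfl <;> norm_num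
  have hp : ∀ i, (σ ^ i) ^ 2 = 1 := by intro i; rw [← pow_mul, mul_comm, pow_mul, hσ2, one_pow]
  have hsub : Finset.range (m+1) ⊆ Finset.range d := by
    intro i hi; simp at *; omega
  have e1 : ∑ i ∈ Finset.range d, tv σ m i ^ 2 = m + 1 := by
    rw [← Finset.sum_subset hsub]
    · rw [Finset.sum_congr rfl (g := fun _ => (1:ℝ))]
      · simp
      · intro i hi
        have : i ≤ m := by simp at hi; omega
        simp [tv, this, hp]
    · intro i _ hi
      have : ¬ i ≤ m := by simp at hi; omega
      simp [tv, this]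
  refine ⟨e1, ?_⟩
  have e2 : ∑ i ∈ Finset.range d, (a i * tv σ m i + b i * tv σ m (i+1)) ^ 2
      = ∑ i ∈ Finset.range (m+1), (a i * tv σ m i + b i * tv σ m (i+1)) ^ 2 := by
    rw [← Finset.sum_subset hsub]
    intro i _ hi
    have h1 : ¬ i ≤ m := by simp at hi; omega
    have h2 : ¬ i + 1 ≤ m := by omega
    simp [tv, h1, h2]
  have e3 : σ * (∑ i ∈ Finset.range d, (a i * tv σ m i + b i * tv σ m (i+1)) ^ 2 - n * (m + 1))
      = ∑ i ∈ Finset.range (m+1), σ * ((a i * tv σ m i + b i * tv σ m (i+1)) ^ 2 - n) := by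
    rw [e2, ← Finset.mul_sum, Finset.sum_sub_distrib]; simp; left; ring
  rw [e3, Finset.sum_range_succ]
  have t1 : ∀ i ∈ Finset.range m, (2 - 8 * δ) * s ≤
      σ * ((a i * tv σ m i + b i * tv σ m (i+1)) ^ 2 - n) := by
    intro i hi
    have hi' : i < m := Finset.mem_range.1 hi
    obtain ⟨h1, h2, h3⟩ := h i hi'.le
    rw [abs_le] at h1
    have q1 : tv σ m i = σ ^ i := by simp [tv, hi'.le]
    have q2 : tv σ m (i+1) = σ ^ (i+1) := by simp [tv, Nat.succ_le_of_lt hi']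
    rw [q1, q2]
    have : σ * ((a i * σ ^ i + b i * σ ^ (i+1)) ^ 2 - n)
        = σ * ((a i ^ 2 - n) + b i ^ 2) + 2 * (a i * b i) := by
      have : (a i * σ ^ i + b i * σ ^ (i+1)) ^ 2 = a i ^ 2 + b i ^ 2 + 2 * (a i * b i) * σ := by
        have h4 := hp i
        rw [pow_succ]
        linear_combination (a i ^ 2 + b i ^ 2 * σ^2 + 2 * a i * b i * σ) * h4 + b i ^ 2 * hσ2
      rw [this]; linear_combination 2 * a i * b i * hσ2
    rw [this]
    have := sq_nonneg (b i)
    rcases hσ with rfl | rfl <;> nlinarith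
  have t2 : - (4 * δ) * s ≤ σ * ((a m * tv σ m m + b m * tv σ m (m+1)) ^ 2 - n) := by
    obtain ⟨h1, h2, h3⟩ := h m le_rfl
    rw [abs_le] at h1
    have q1 : tv σ m m = σ ^ m := by simp [tv]
    have q2 : tv σ m (m+1) = 0 := by simp [tv]
    rw [q1, q2]
    have : (a m * σ ^ m + b m * 0) ^ 2 = a m ^ 2 := by
      linear_combination a m ^ 2 * hp m
    rw [this]
    have := sq_nonneg (b m)
    have := mul_nonneg hδ hs
    rcases hσ with rfl | rfl <;> nlinarith
  have t3 := Finset.card_nsmul_le_sum _ _ _ t1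
  simp only [Finset.card_range, nsmul_eq_mul] at t3
  have t4 : 0 ≤ s * (2 * (δ * m - 1) + 6 * δ) := mul_nonneg hs (by linarith)
  nlinarith

lemma good_bounds {n d m : ℕ} {δ : ℝ} (hδ : 0 < δ) (hδ2 : δ ≤ 1/2) (hd : 1 ≤ d)
    (hdn : (d : ℝ) ≤ δ^2 * n) (hm : 1 ≤ δ * m) (hmd : (m : ℝ) + 1 ≤ δ * d)
    {G : Fin n × Fin d → ℝ} (hG : Good (δ * √(n * d)) (δ * d) n d G) :
    (∀ y, |sqn (mv G y) - n * sqn y| ≤ (2 + 6 * δ) * √(n * d) * sqn y) ∧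
    ∀ σ : ℝ, σ = 1 ∨ σ = -1 → ∃ y, 0 < sqn y ∧
      (2 - 10 * δ) * √(n * d) * sqn y ≤ σ * (sqn (mv G y) - n * sqn y) := by
  obtain ⟨a, b, R, hab, hR, hRn, -, hF⟩ := hG
  set s := √((n:ℝ) * d) with hs
  have hd' : (1:ℝ) ≤ d := by exact_mod_cast hd
  have hn0 : (0:ℝ) ≤ n := Nat.cast_nonneg n
  have hs0 : 0 ≤ s := Real.sqrt_nonneg _
  have hss : s ^ 2 = n * d := Real.sq_sqrt (by positivity)
  have hds : (d:ℝ) ≤ δ * s := by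
    refine le_of_sq_le_sq ?_ (by positivity)
    rw [mul_pow, hss]; nlinarith
  have hsn : s ≤ δ * n := by
    refine le_of_sq_le_sq ?_ (by positivity)
    rw [mul_pow, hss]; nlinarith
  have hdn' : (d:ℝ) ≤ δ * n := by nlinarith
  have A : ∀ i < d, 0 ≤ a i ∧ 0 ≤ b i ∧ |a i ^ 2 - n| ≤ 2 * δ * s ∧ b i ^ 2 ≤ 2 * δ * s ∧
      a i * b i ≤ (1 + δ) * s := by
    intro i hi
    obtain ⟨h1, h2, h3, h4⟩ := hab i hi
    have hi' : (i:ℝ) ≤ d := by exact_mod_cast hi.le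
    have hi0 : (0:ℝ) ≤ i := Nat.cast_nonneg i
    rw [abs_le] at h3 h4
    refine ⟨h1, h2, abs_le.2 ⟨by linarith, by linarith⟩, by nlinarith, ?_⟩
    refine le_of_sq_le_sq ?_ (by positivity)
    rw [mul_pow, mul_pow, hss]
    have g1 : a i ^ 2 ≤ (1 + δ) * n := by nlinarith
    have g2 : b i ^ 2 ≤ (1 + δ) * d := by nlinarith
    calc a i ^ 2 * b i ^ 2 ≤ ((1 + δ) * n) * ((1 + δ) * d) := by gcongr
      _ = _ := by ring
  have hmd' : m < d := by
    have : (m:ℝ) < d := by nlinarith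
    exact_mod_cast this
  constructor
  · intro y
    obtain ⟨x, rfl⟩ := hR y
    rw [hF, hRn, sqn_ex]
    exact det_upper hs0 hδ.le (by simp [ex]) A
  · intro σ hσ
    have B : ∀ i ≤ m, |a i ^ 2 - n| ≤ 2 * δ * s ∧ b i ^ 2 ≤ 2 * δ * s ∧
      (1 - 2 * δ) * s ≤ a i * b i := by
      intro i hi
      obtain ⟨-, -, h5, h6, -⟩ := A i (by omega)
      obtain ⟨h1, h2, h3, h4⟩ := hab i (by omega)
      have hi' : (i:ℝ) ≤ m := by exact_mod_cast hi
      rw [abs_le] at h3 h4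
      refine ⟨h5, h6, le_of_sq_le_sq ?_ (by positivity)⟩
      rw [mul_pow, mul_pow, hss]
      have g1 : (1 - 2 * δ) * n ≤ a i ^ 2 := by nlinarith
      have g2 : (1 - 2 * δ) * d ≤ b i ^ 2 := by nlinarith
      have g3 : 0 ≤ 1 - 2 * δ := by linarith
      calc _ = ((1 - 2 * δ) * n) * ((1 - 2 * δ) * d) := by ring
        _ ≤ a i ^ 2 * b i ^ 2 := by gcongr
    obtain ⟨c1, c2⟩ := det_lower (σ := σ) hs0 hσ hmd' hm hδ.le B
    have hex : ∀ i, ex (fun j : Fin d => tv σ m j) i = tv σ m i := by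
      intro i
      by_cases hi : i < d
      · simp [ex, hi]
      · have : ¬ i ≤ m := by omega
        simp [ex, hi, tv, this]
    refine ⟨R (fun j => tv σ m j), ?_⟩
    rw [hF, hRn, sqn_ex]
    simp only [hex, c1]
    exact ⟨by positivity, c2⟩

end CovStar

namespace CovStar

lemma eig_le {d : ℕ} {A : Matrix (Fin d) (Fin d) ℝ} (hA : A.IsHermitian) (i : Fin d) :
    ∃ x : Fin d → ℝ, sqn x = 1 ∧ x ⬝ᵥ (A *ᵥ x) = hA.eigenvalues i := by
  refine ⟨hA.eigenvectorBasis i, ?_, ?_⟩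
  · have := hA.eigenvectorBasis.orthonormal.1 i
    rw [EuclideanSpace.norm_eq, Real.sqrt_eq_one] at this
    simpa [sqn] using this
  · have := hA.eigenvalues_eq i
    simpa using this.symm

lemma quad_eig {d : ℕ} {A : Matrix (Fin d) (Fin d) ℝ} (hA : A.IsHermitian) (x : Fin d → ℝ) :
    ∃ c : Fin d → ℝ, sqn x = ∑ i, c i ^ 2 ∧ x ⬝ᵥ (A *ᵥ x) = ∑ i, hA.eigenvalues i * c i ^ 2 := by
  let v := hA.eigenvectorBasis
  have key : ∀ y : Fin d → ℝ, x ⬝ᵥ y = ∑ i, (x ⬝ᵥ v i) * (v i ⬝ᵥ y) := by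
    intro y
    have := v.sum_inner_mul_inner (WithLp.toLp 2 x) (WithLp.toLp 2 y)
    simp only [EuclideanSpace.inner_eq_star_dotProduct, star_trivial] at this
    rw [dotProduct_comm x y, ← this]
    refine Finset.sum_congr rfl fun i _ => ?_
    rw [dotProduct_comm x, dotProduct_comm y]
  refine ⟨fun i => x ⬝ᵥ v i, ?_, ?_⟩
  · have := key x
    have e : sqn x = x ⬝ᵥ x := by simp [sqn, dotProduct, sq]
    rw [e, this]
    refine Finset.sum_congr rfl fun i _ => ?_
    rw [dotProduct_comm _ x, sq]
  · rw [key]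
    refine Finset.sum_congr rfl fun i _ => ?_
    have : v i ⬝ᵥ (A *ᵥ x) = hA.eigenvalues i * (x ⬝ᵥ v i) := by
      rw [dotProduct_mulVec, ← mulVec_transpose]
      have hT : Aᵀ = A := by
        ext a b; simpa using hA.apply a b
      rw [hT, hA.mulVec_eigenvectorBasis, smul_dotProduct, dotProduct_comm]; rfl
    rw [this]; ring

lemma exists_eig_ge {d : ℕ} {A : Matrix (Fin d) (Fin d) ℝ} (hA : A.IsHermitian) {σ C : ℝ}
    (x : Fin d → ℝ) (hx : 0 < sqn x) (h : C * sqn x ≤ σ * (x ⬝ᵥ (A *ᵥ x))) :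
    ∃ i, C ≤ σ * hA.eigenvalues i := by
  obtain ⟨c, h1, h2⟩ := quad_eig hA x
  by_contra! hc
  rw [h1] at hx
  obtain ⟨j, -, hj⟩ : ∃ j ∈ Finset.univ, 0 < c j ^ 2 := by
    by_contra! h3
    exact absurd hx (not_lt.2 (Finset.sum_nonpos h3))
  rw [h1, h2, Finset.mul_sum, Finset.mul_sum] at h
  refine absurd h (not_le.2 (Finset.sum_lt_sum (fun i _ => ?_) ⟨j, Finset.mem_univ _, ?_⟩))
  · rw [← mul_assoc]; exact mul_le_mul_of_nonneg_right (hc i).le (sq_nonneg _)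
  · rw [← mul_assoc]; exact mul_lt_mul_of_pos_right (hc j) hj

/-- pathwise conclusion for sorted eigenvalues -/
def EigB {d : ℕ} (A : Matrix (Fin d) (Fin d) ℝ) (c C : ℝ) : Prop :=
  (∀ i, |sortedEigs A i| ≤ C) ∧ (∃ i, c ≤ sortedEigs A i) ∧ (∃ i, sortedEigs A i ≤ -c)

lemma eigB_of {d : ℕ} {A : Matrix (Fin d) (Fin d) ℝ} (hA : A.IsHermitian) {c C : ℝ}
    (h1 : ∀ x, |x ⬝ᵥ (A *ᵥ x)| ≤ C * sqn x)
    (h2 : ∀ σ : ℝ, σ = 1 ∨ σ = -1 → ∃ x, 0 < sqn x ∧ c * sqn x ≤ σ * (x ⬝ᵥ (A *ᵥ x))) :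
    EigB A c C := by
  have e : sortedEigs A = hA.eigenvalues ∘ Tuple.sort hA.eigenvalues := by
    rw [sortedEigs, dif_pos hA]
  have ex : ∀ σ : ℝ, σ = 1 ∨ σ = -1 → ∃ i, c ≤ σ * sortedEigs A i := by
    intro σ hσ
    obtain ⟨x, hx, hc⟩ := h2 σ hσ
    obtain ⟨i, hi⟩ := exists_eig_ge hA x hx hc
    refine ⟨(Tuple.sort hA.eigenvalues).symm i, ?_⟩
    rw [e]; simpa using hi
  refine ⟨fun i => ?_, ?_, ?_⟩
  · obtain ⟨x, hx, hl⟩ := eig_le hA (Tuple.sort hA.eigenvalues i)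
    rw [e, Function.comp_apply, ← hl]
    simpa [hx] using h1 x
  · obtain ⟨i, hi⟩ := ex 1 (Or.inl rfl)
    exact ⟨i, by linarith⟩
  · obtain ⟨i, hi⟩ := ex (-1) (Or.inr rfl)
    exact ⟨i, by linarith⟩

lemma eigB_bounds {d : ℕ} {A : Matrix (Fin d) (Fin d) ℝ} {c C : ℝ} (h : EigB A c C) :
    (c ≤ specNorm A ∧ specNorm A ≤ C) ∧ (-C ≤ ⨅ i, sortedEigs A i ∧ ⨅ i, sortedEigs A i ≤ -c) ∧
    (c ≤ ⨆ i, sortedEigs A i ∧ ⨆ i, sortedEigs A i ≤ C) := by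
  obtain ⟨h1, ⟨i, hi⟩, ⟨j, hj⟩⟩ := h
  haveI : Nonempty (Fin d) := ⟨i⟩
  refine ⟨⟨?_, ciSup_le h1⟩, ⟨le_ciInf fun k => (abs_le.1 (h1 k)).1, ?_⟩, ⟨?_, ciSup_le fun k => (abs_le.1 (h1 k)).2⟩⟩
  · exact (hi.trans (le_abs_self _)).trans (le_ciSup (f := fun k => |sortedEigs A k|) (Set.finite_range _).bddAbove i)
  · exact (ciInf_le (Set.finite_range _).bddBelow j).trans hj
  · exact hi.trans (le_ciSup (Set.finite_range _).bddAbove i)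

/-- the centered and scaled sample covariance matrix -/
noncomputable def cov (n d : ℕ) (X : Fin n → Fin d → ℝ) : Matrix (Fin d) (Fin d) ℝ :=
  Real.sqrt ((n : ℝ) / d) • ((n : ℝ)⁻¹ • ∑ j : Fin n, vecMulVec (X j) (X j) - 1)

lemma cov_herm (n d : ℕ) (X : Fin n → Fin d → ℝ) : (cov n d X).IsHermitian := by
  ext i j
  simp only [cov, conjTranspose_apply, Matrix.smul_apply, Matrix.sub_apply, Matrix.sum_apply, vecMulVec_apply, star_trivial,
    Matrix.one_apply, mul_comm, eq_comm]

lemma cov_quad {n d : ℕ} (hn : 0 < n) (hd : 0 < d) (X : Fin n → Fin d → ℝ) (x : Fin d → ℝ) :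
    x ⬝ᵥ (cov n d X *ᵥ x) =
      (sqn (mv (fun p : Fin n × Fin d => X p.1 p.2) x) - n * sqn x) / √(n * d) := by
  have h1 : x ⬝ᵥ ((∑ j : Fin n, vecMulVec (X j) (X j)) *ᵥ x)
      = sqn (mv (fun p : Fin n × Fin d => X p.1 p.2) x) := by
    rw [Matrix.sum_mulVec, dotProduct_sum]
    refine Finset.sum_congr rfl fun j _ => ?_
    rw [vecMulVec_mulVec]
    have : mv (fun p : Fin n × Fin d => X p.1 p.2) x j = X j ⬝ᵥ x := rfl
    rw [this]
    simp [dotProduct_comm x, sq]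
  have h2 : x ⬝ᵥ x = sqn x := by simp [sqn, dotProduct, sq]
  rw [cov, smul_mulVec, dotProduct_smul, sub_mulVec, dotProduct_sub, smul_mulVec, dotProduct_smul,
    h1, one_mulVec, h2, smul_eq_mul, smul_eq_mul]
  have hn' : (0:ℝ) < n := by exact_mod_cast hn
  have hd' : (0:ℝ) < d := by exact_mod_cast hd
  rw [Real.sqrt_div hn'.le, Real.sqrt_mul hn'.le]
  have a1 := Real.sqrt_pos.2 hn'
  have a2 := Real.sqrt_pos.2 hd'
  have a3 := Real.sq_sqrt hn'.le
  field_simp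
  rw [a3]

lemma eigB_cov {n d m : ℕ} {δ : ℝ} (hδ : 0 < δ) (hδ2 : δ ≤ 1/2) (hd : 1 ≤ d)
    (hdn : (d : ℝ) ≤ δ^2 * n) (hm : 1 ≤ δ * m) (hmd : (m : ℝ) + 1 ≤ δ * d)
    {X : Fin n → Fin d → ℝ} 
    (hG : Good (δ * √(n * d)) (δ * d) n d (fun p : Fin n × Fin d => X p.1 p.2)) :
    EigB (cov n d X) (2 - 10 * δ) (2 + 6 * δ) := by
  obtain ⟨g1, g2⟩ := good_bounds hδ hδ2 hd hdn hm hmd hG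
  have hd' : (0:ℝ) < d := by exact_mod_cast hd
  have hn' : (0:ℝ) < n := by
    by_contra hc
    have : (n:ℝ) = 0 := le_antisymm (not_lt.1 hc) (Nat.cast_nonneg n)
    rw [this] at hdn; linarith
  have hs : 0 < √((n:ℝ) * d) := by positivity
  refine eigB_of (cov_herm _ _ _) (fun x => ?_) fun σ hσ => ?_
  · rw [cov_quad (by exact_mod_cast hn') hd, abs_div, abs_of_pos hs, div_le_iff₀ hs]
    refine (g1 x).trans_eq (by ring)
  · obtain ⟨x, hx, hc⟩ := g2 σ hσ
    refine ⟨x, hx, ?_⟩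
    rw [cov_quad (by exact_mod_cast hn') hd, ← mul_div_assoc, le_div_iff₀ hs]
    refine le_trans (le_of_eq (by ring)) hc

lemma bad_prob {n d : ℕ} {δ : ℝ} (hδ : 0 < δ) (hδ2 : δ ≤ 1/2) (hdn : d ≤ n) :
    gam (Fin n × Fin d) {G | ¬ Good (δ * √(n * d)) (δ * d) n d G} ≤
      ENNReal.ofReal (4 * (d * Real.exp (- (δ^2/8) * d))) := by
  rcases Nat.eq_zero_or_pos d with rfl | hd
  · have : {G : Fin n × Fin 0 → ℝ | ¬ Good (δ * √(n * (0:ℕ))) (δ * (0:ℕ)) n 0 G} = ∅ := by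
      ext G
      simp only [Set.mem_ofPred_eq, Set.mem_empty_iff_false, iff_false, not_not]
      refine ⟨0, 0, id, by simp, Function.surjective_id, fun _ => rfl, fun _ => rfl, fun x => ?_⟩
      simp [sqn, mv]
    rw [this]; simp
  have hd' : (0:ℝ) < d := by exact_mod_cast hd
  have hdn' : (d:ℝ) ≤ n := by exact_mod_cast hdn
  have hn' : (0:ℝ) < n := hd'.trans_le hdn'
  set s := √((n:ℝ) * d) with hs
  have hss : s ^ 2 = n * d := Real.sq_sqrt (by positivity)
  have hs0 : 0 ≤ s := Real.sqrt_nonneg _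
  have hsn : s ≤ n := by
    refine le_of_sq_le_sq ?_ hn'.le
    rw [hss]; nlinarith
  have t1 : ∀ k ≤ n, gam (Fin k) {x | δ * s < |sqn x - (k : ℝ)|} ≤
      ENNReal.ofReal (2 * Real.exp (- (δ^2/8) * d)) := by
    intro k hk
    refine (tail (N := n) hn' (by exact_mod_cast hk) (by positivity) (by nlinarith)).trans_eq ?_
    congr 3
    rw [mul_pow, hss]; field_simp
  have t2 : ∀ k ≤ d, gam (Fin k) {x | δ * d < |sqn x - (k : ℝ)|} ≤
      ENNReal.ofReal (2 * Real.exp (- (δ^2/8) * d)) := by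
    intro k hk
    refine (tail (N := d) hd' (by exact_mod_cast hk) (by positivity) (by nlinarith)).trans_eq ?_
    congr 3
    rw [mul_pow]; field_simp
  obtain ⟨E, hE, hG, hm⟩ := good_prob n d t1 t2 d n hdn le_rfl le_rfl
  refine (measure_mono (t := Eᶜ) ?_).trans (hm.trans_eq ?_)
  · intro G hGb hGE
    exact hGb (hG G hGE)
  · rw [← ENNReal.ofReal_add (by positivity) (by positivity), ← ENNReal.ofReal_natCast,
      ← ENNReal.ofReal_mul (by positivity)]
    congr 1; ring

lemma ae_eigB {Ωs : Type*} [MeasurableSpace Ωs] (P : Measure Ωs) [IsProbabilityMeasure P]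
    (n : ℕ → ℕ)
    (hdn : Tendsto (fun d : ℕ => (d : ℝ) / (n d : ℝ)) atTop (nhds 0)) (hn : Tendsto n atTop atTop)
    (X : ∀ d : ℕ, Fin (n d) → Ωs → Fin d → ℝ)
    (hmeas : ∀ d j, Measurable (X d j))
    (hindep : ∀ d, iIndepFun (X d) P)
    (hgauss : ∀ d j,
      Measure.map (X d j) P = Measure.pi fun _ : Fin d => gaussianReal 0 1)
    {δ : ℝ} (hδ : 0 < δ) (hδ2 : δ ≤ 1/2) :
    ∀ᵐ ω ∂P, ∀ᶠ d in atTop,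
      EigB (cov (n d) d (fun j => X d j ω)) (2 - 10 * δ) (2 + 6 * δ) := by
  have hmp : ∀ d, MeasurePreserving
      (fun ω (p : Fin (n d) × Fin d) => X d p.1 ω p.2) P (gam (Fin (n d) × Fin d)) := by
    intro d
    have h1 : MeasurePreserving (fun ω j => X d j ω) P (Measure.pi fun _ : Fin (n d) => gam (Fin d)) := by
      refine ⟨measurable_pi_iff.2 (hmeas d), ?_⟩
      rw [(iIndepFun_iff_map_fun_eq_pi_map fun j => (hmeas d j).aemeasurable).1 (hindep d)]
      simp only [hgauss]
    exact gam_uncurry.comp h1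
  let B : ℕ → Set Ωs := fun d => {ω | d ≤ n d ∧ ¬ Good (δ * √(n d * d)) (δ * d) (n d) d
    (fun p : Fin (n d) × Fin d => X d p.1 ω p.2)}
  have hB : ∀ d, P (B d) ≤ ENNReal.ofReal (4 * (d * Real.exp (- (δ^2/8) * d))) := by
    intro d
    by_cases h : d ≤ n d
    · refine le_trans ?_ (bad_prob hδ hδ2 h)
      refine le_trans ?_ ((hmp d).measure_preimage_le _)
      exact measure_mono fun ω hω => hω.2
    · have : B d = ∅ := by
        ext ω; simp [B, h]
      rw [this]; simp
  have hsum : Summable fun d : ℕ => 4 * ((d:ℝ) * Real.exp (- (δ^2/8) * d)) := by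
    have := Real.summable_pow_mul_exp_neg_nat_mul 1 (r := δ^2/8) (by positivity)
    simp only [pow_one] at this
    exact this.mul_left 4
  have hfin : ∑' d, P (B d) ≠ ⊤ :=
    ne_top_of_le_ne_top hsum.tsum_ofReal_ne_top (ENNReal.tsum_le_tsum hB)
  obtain ⟨m, hm⟩ := exists_nat_ge (1/δ)
  have hm' : 1 ≤ δ * m := by
    rw [div_le_iff₀ hδ] at hm; linarith
  have ev1 : ∀ᶠ d : ℕ in atTop, (d:ℝ) / n d < δ^2 := hdn.eventually_lt_const (by positivity)
  have ev2 : ∀ᶠ d : ℕ in atTop, 0 < n d := hn.eventually_gt_atTop 0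
  have ev3 : ∀ᶠ d : ℕ in atTop, ((m:ℝ) + 1) / δ ≤ d :=
    tendsto_natCast_atTop_atTop.eventually_ge_atTop _
  filter_upwards [ae_eventually_notMem hfin] with ω hω
  filter_upwards [hω, ev1, ev2, ev3, eventually_ge_atTop 1] with d h0 h1 h2 h3 h4
  have hn' : (0:ℝ) < n d := by exact_mod_cast h2
  rw [div_lt_iff₀ hn'] at h1
  rw [div_le_iff₀ hδ] at h3
  refine eigB_cov hδ hδ2 h4 h1.le hm' (by linarith) ?_
  have hle : d ≤ n d := by
    have : (d:ℝ) ≤ n d := by nlinarith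
    exact_mod_cast this
  by_contra hc
  exact h0 ⟨hle, hc⟩

end CovStar

/-- **Proposition 3 (Bai–Yin type limits):** for an i.i.d. standard normal sample
`N_d(0, I)` with `n(d) → ∞` and `d/n(d) → 0`, setting
`S*_d = √(n(d)/d)·(S_d − I)` where `S_d` is the sample covariance matrix, one has
`‖S*_d‖₂ → 2`, `λ_1(S*_d) → −2` and `λ_d(S*_d) → 2` almost surely as `d → ∞`. -/
theorem covStar_extreme_eigenvalues_as
    {Ωs : Type*} [MeasurableSpace Ωs] (P : Measure Ωs) [IsProbabilityMeasure P]
    (n : ℕ → ℕ) (hn : Tendsto n atTop atTop)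
    (hdn : Tendsto (fun d : ℕ => (d : ℝ) / (n d : ℝ)) atTop (nhds 0))
    (X : ∀ d : ℕ, Fin (n d) → Ωs → Fin d → ℝ)
    (hmeas : ∀ d j, Measurable (X d j))
    (hindep : ∀ d, iIndepFun (X d) P)
    (hgauss : ∀ d j,
      Measure.map (X d j) P = Measure.pi fun _ : Fin d => gaussianReal 0 1) :
    ∀ᵐ ω ∂P,
      Tendsto (fun d =>
          specNorm (Real.sqrt ((n d : ℝ) / d) •
            ((n d : ℝ)⁻¹ • ∑ j : Fin (n d), vecMulVec (X d j ω) (X d j ω) - 1)))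
        atTop (nhds 2) ∧
      Tendsto (fun d => ⨅ i : Fin d,
          sortedEigs (Real.sqrt ((n d : ℝ) / d) •
            ((n d : ℝ)⁻¹ • ∑ j : Fin (n d), vecMulVec (X d j ω) (X d j ω) - 1)) i)
        atTop (nhds (-2)) ∧
      Tendsto (fun d => ⨆ i : Fin d,
          sortedEigs (Real.sqrt ((n d : ℝ) / d) •
            ((n d : ℝ)⁻¹ • ∑ j : Fin (n d), vecMulVec (X d j ω) (X d j ω) - 1)) i)
        atTop (nhds 2) := by
  have key : ∀ k : ℕ, ∀ᵐ ω ∂P, ∀ᶠ d in atTop,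
      CovStar.EigB (CovStar.cov (n d) d (fun j => X d j ω))
        (2 - 10 * (1 / ((k:ℝ) + 2))) (2 + 6 * (1 / ((k:ℝ) + 2))) := by
    intro k
    refine CovStar.ae_eigB P n hdn hn X hmeas hindep hgauss (by positivity) ?_
    rw [div_le_div_iff₀ (by positivity) (by positivity)]
    have : (0:ℝ) ≤ k := Nat.cast_nonneg k
    linarith
  filter_upwards [ae_all_iff.2 key] with ω hω
  have key2 : ∀ ε > 0, ∀ᶠ d in atTop,
      CovStar.EigB (CovStar.cov (n d) d (fun j => X d j ω)) (2 - ε / 2) (2 + ε / 2) := by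
    intro ε hε
    obtain ⟨k, hk⟩ := exists_nat_ge (20 / ε)
    have h1 : 10 * (1 / ((k:ℝ) + 2)) ≤ ε / 2 := by
      rw [div_le_iff₀ hε] at hk
      rw [mul_one_div, div_le_div_iff₀ (by positivity) (by positivity)]
      nlinarith
    have h2 : 0 ≤ 1 / ((k:ℝ) + 2) := by positivity
    filter_upwards [hω k] with d ⟨h3, ⟨i, hi⟩, ⟨j, hj⟩⟩
    exact ⟨fun i => (h3 i).trans (by linarith), ⟨i, by linarith⟩, ⟨j, by linarith⟩⟩
  refine ⟨?_, ?_, ?_⟩ <;> rw [Metric.tendsto_nhds] <;> intro ε hε <;>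
    filter_upwards [key2 ε hε] with d hd <;>
    obtain ⟨⟨a1, a2⟩, ⟨b1, b2⟩, ⟨c1, c2⟩⟩ := CovStar.eigB_bounds hd <;>
    simp only [CovStar.cov] at a1 a2 b1 b2 c1 c2 <;>
    rw [Real.dist_eq, abs_lt] <;> constructor <;> linarith
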